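/- arXiv:2007.12225 — 3 statements merged into one kernel-verified Lean document; each statement's English description precedes it below -/
import Mathlib

section
/- (Appendix C, eq. (C.10)) Let W be a channel from 𝒳 to 𝒴 and let Q_{XX'} be a pmf on 𝒳 × 𝒳. Then Λ(Q_{XX'}) ≥ sup_{μ ≥ 0} sup over strictly positive conditional pmfs V(·|x) on 𝒴 inf over strictly positive conditional pmfs V'(·|x') on 𝒴 of { −∑_{x,x'} Q_{XX'}(x,x') log [ ∑_y W(y|x) V'(y|x')^{μ} V(y|x)^{−μ} ] }. -/
open Real BigOperators Filter

namespace EE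

variable {𝒳 𝒴 : Type*} [Fintype 𝒳] [Fintype 𝒴]

/-- `p` is a probability mass function on a finite type. -/
def IsPMF {α : Type*} [Fintype α] (p : α → ℝ) : Prop :=
  (∀ a, 0 ≤ p a) ∧ ∑ a, p a = 1

/-- `p` is a strictly positive probability mass function on a finite type. -/
def IsPosPMF {α : Type*} [Fintype α] (p : α → ℝ) : Prop :=
  (∀ a, 0 < p a) ∧ ∑ a, p a = 1

/-- A channel from `𝒳` to `𝒴`: every row `W (·|x)` is a strictly positive pmf on `𝒴`. -/
def IsChannel (W : 𝒳 → 𝒴 → ℝ) : Prop := ∀ x, IsPosPMF (W x)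

/-- A joint pmf on `𝒳 × 𝒴`, in curried form. -/
def IsJointPMF (Q : 𝒳 → 𝒴 → ℝ) : Prop :=
  (∀ x y, 0 ≤ Q x y) ∧ ∑ x, ∑ y, Q x y = 1

/-- A joint pmf on `𝒳 × 𝒳 × 𝒴`, in curried form. -/
def IsJointPMF3 (Q : 𝒳 → 𝒳 → 𝒴 → ℝ) : Prop :=
  (∀ x x' y, 0 ≤ Q x x' y) ∧ ∑ x, ∑ x', ∑ y, Q x x' y = 1

/-- `𝒳`-marginal of a joint pmf. -/
def margX (Q : 𝒳 → 𝒴 → ℝ) : 𝒳 → ℝ := fun x => ∑ y, Q x y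

/-- `𝒴`-marginal of a joint pmf. -/
def margY (Q : 𝒳 → 𝒴 → ℝ) : 𝒴 → ℝ := fun y => ∑ x, Q x y

/-- Shannon entropy (natural logarithm, with the convention `0 log 0 = 0`,
which holds automatically since `Real.log 0 = 0`). -/
noncomputable def ent {α : Type*} [Fintype α] (p : α → ℝ) : ℝ :=
  -∑ a, p a * Real.log (p a)

/-- Mutual information `I_Q(X;Y)` of a joint pmf `Q` on `𝒳 × 𝒴`. -/
noncomputable def mutInf (Q : 𝒳 → 𝒴 → ℝ) : ℝ :=
  ∑ x, ∑ y, Q x y * Real.log (Q x y / (margX Q x * margY Q y))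

/-- Conditional entropy `H_Q(Y|X)` of a joint pmf `Q` on `𝒳 × 𝒴`. -/
noncomputable def condEntYX (Q : 𝒳 → 𝒴 → ℝ) : ℝ :=
  -∑ x, ∑ y, Q x y * Real.log (Q x y / margX Q x)

/-- Conditional entropy `H_Q(X|Y)` of a joint pmf `Q` on `𝒳 × 𝒴`. -/
noncomputable def condEntXY (Q : 𝒳 → 𝒴 → ℝ) : ℝ :=
  -∑ x, ∑ y, Q x y * Real.log (Q x y / margY Q y)

/-- The maximum-likelihood decoding metric `g_ML(Q) = ∑ Q(x,y) log W(y|x)`. -/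
noncomputable def gML (W : 𝒳 → 𝒴 → ℝ) (Q : 𝒳 → 𝒴 → ℝ) : ℝ :=
  ∑ x, ∑ y, Q x y * Real.log (W x y)

/-- The maximum mutual information decoding metric `g_MMI(Q) = I_Q(X;Y)`. -/
noncomputable def gMMI (Q : 𝒳 → 𝒴 → ℝ) : ℝ := mutInf Q

/-- The quantity `a_g(R, Q_Y)`: the maximum of `g(Q_{X̃Y})` over joint pmfs with
`𝒳`-marginal `Q_X`, `𝒴`-marginal `Q_Y` and `I_Q(X̃;Y) ≤ R`. -/
noncomputable def aFun (g : (𝒳 → 𝒴 → ℝ) → ℝ) (QX : 𝒳 → ℝ) (R : ℝ) (QY : 𝒴 → ℝ) : ℝ :=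
  sSup {v : ℝ | ∃ Q : 𝒳 → 𝒴 → ℝ, IsJointPMF Q ∧ margX Q = QX ∧ margY Q = QY ∧
    mutInf Q ≤ R ∧ v = g Q}

/-- Joint pmf on `𝒳 × 𝒳 × 𝒴` built from `Q_{XX'}` and a conditional pmf `Q_{Y|XX'}`. -/
def jointQ (QXX' : 𝒳 → 𝒳 → ℝ) (Qc : 𝒳 → 𝒳 → 𝒴 → ℝ) : 𝒳 → 𝒳 → 𝒴 → ℝ :=
  fun x x' y => QXX' x x' * Qc x x' y

/-- Marginal `Q_{XY}` of a joint pmf on `𝒳 × 𝒳 × 𝒴`. -/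
def margXY3 (Q : 𝒳 → 𝒳 → 𝒴 → ℝ) : 𝒳 → 𝒴 → ℝ := fun x y => ∑ x', Q x x' y

/-- Marginal `Q_{X'Y}` of a joint pmf on `𝒳 × 𝒳 × 𝒴`. -/
def margX'Y3 (Q : 𝒳 → 𝒳 → 𝒴 → ℝ) : 𝒳 → 𝒴 → ℝ := fun x' y => ∑ x, Q x x' y

/-- Marginal `Q_Y` of a joint pmf on `𝒳 × 𝒳 × 𝒴`. -/
def margY3 (Q : 𝒳 → 𝒳 → 𝒴 → ℝ) : 𝒴 → ℝ := fun y => ∑ x, ∑ x', Q x x' y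

/-- Conditional entropy `H_Q(Y|X,X')` of a joint pmf on `𝒳 × 𝒳 × 𝒴`. -/
noncomputable def condEntY3 (Q : 𝒳 → 𝒳 → 𝒴 → ℝ) : ℝ :=
  -∑ x, ∑ x', ∑ y, Q x x' y * Real.log (Q x x' y / ∑ y', Q x x' y')

/-- The objective `−E_Q[log W(Y|X)] − H_Q(Y|X,X')`. -/
noncomputable def obj (W : 𝒳 → 𝒴 → ℝ) (Q : 𝒳 → 𝒳 → 𝒴 → ℝ) : ℝ :=
  (-∑ x, ∑ x', ∑ y, Q x x' y * Real.log (W x y)) - condEntY3 Q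

/-- `Γ_g(Q_{XX'}, R)`: the infimum of `−E_Q[log W(Y|X)] − H_Q(Y|X,X')` over conditional
pmfs `Q_{Y|XX'}` satisfying `g(Q_{X'Y}) ≥ max (g(Q_{XY})) (a_g(R,Q_Y))`, as an
extended real, with `inf ∅ = +∞`. -/
noncomputable def Gamma (W : 𝒳 → 𝒴 → ℝ) (g : (𝒳 → 𝒴 → ℝ) → ℝ) (QX : 𝒳 → ℝ)
    (R : ℝ) (QXX' : 𝒳 → 𝒳 → ℝ) : EReal :=
  sInf {v : EReal | ∃ Qc : 𝒳 → 𝒳 → 𝒴 → ℝ, (∀ x x', IsPMF (Qc x x')) ∧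
    max (g (margXY3 (jointQ QXX' Qc))) (aFun g QX R (margY3 (jointQ QXX' Qc)))
      ≤ g (margX'Y3 (jointQ QXX' Qc)) ∧
    v = ((obj W (jointQ QXX' Qc) : ℝ) : EReal)}

/-- The single-letter TRC exponent `E_trc^g(R, Q_X)`. -/
noncomputable def Etrc (W : 𝒳 → 𝒴 → ℝ) (g : (𝒳 → 𝒴 → ℝ) → ℝ) (QX : 𝒳 → ℝ)
    (R : ℝ) : EReal :=
  sInf {v : EReal | ∃ QXX' : 𝒳 → 𝒳 → ℝ, IsJointPMF QXX' ∧ margX QXX' = QX ∧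
    margY QXX' = QX ∧ mutInf QXX' ≤ 2 * R ∧
    v = Gamma W g QX R QXX' + ((mutInf QXX' : ℝ) : EReal) - ((R : ℝ) : EReal)}

/-- The single-letter expurgated exponent `E_ex^g(R, Q_X)`. -/
noncomputable def Eex (W : 𝒳 → 𝒴 → ℝ) (g : (𝒳 → 𝒴 → ℝ) → ℝ) (QX : 𝒳 → ℝ)
    (R : ℝ) : EReal :=
  sInf {v : EReal | ∃ QXX' : 𝒳 → 𝒳 → ℝ, IsJointPMF QXX' ∧ margX QXX' = QX ∧
    margY QXX' = QX ∧ mutInf QXX' ≤ R ∧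
    v = Gamma W g QX R QXX' + ((mutInf QXX' : ℝ) : EReal) - ((R : ℝ) : EReal)}

/-- `Λ(Q_{XX'})`. -/
noncomputable def Lambda (W : 𝒳 → 𝒴 → ℝ) (QXX' : 𝒳 → 𝒳 → ℝ) : EReal :=
  ⨆ μ : {μ : ℝ // 0 ≤ μ}, ⨅ Qc : {Qc : 𝒳 → 𝒳 → 𝒴 → ℝ // ∀ x x', IsPMF (Qc x x')},
    ((obj W (jointQ QXX' Qc.1) + μ.1 * (mutInf (margXY3 (jointQ QXX' Qc.1)) -
      mutInf (margX'Y3 (jointQ QXX' Qc.1))) : ℝ) : EReal)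

/-- `Φ(Q_{XX'}, R)`. -/
noncomputable def Phi (W : 𝒳 → 𝒴 → ℝ) (QXX' : 𝒳 → 𝒳 → ℝ) (R : ℝ) : EReal :=
  ⨆ μ : {μ : ℝ // 0 ≤ μ}, ⨅ Qc : {Qc : 𝒳 → 𝒳 → 𝒴 → ℝ // ∀ x x', IsPMF (Qc x x')},
    ((obj W (jointQ QXX' Qc.1) + μ.1 * (R - mutInf (margX'Y3 (jointQ QXX' Qc.1))) : ℝ) : EReal)

/-- `Ψ(Q_{XX'})`. -/
noncomputable def Psi (W : 𝒳 → 𝒴 → ℝ) (QXX' : 𝒳 → 𝒳 → ℝ) : EReal :=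
  ⨆ s : {s : ℝ // 0 ≤ s},
    ((-∑ x, ∑ x', QXX' x x' * Real.log (∑ y, W x y ^ (1 - s.1) * W x' y ^ s.1) : ℝ) : EReal)

/-- `G(y, σ, τ, V)`. -/
noncomputable def Gfun (W : 𝒳 → 𝒴 → ℝ) (QX : 𝒳 → ℝ) (y : 𝒴) (σ τ : ℝ)
    (V : 𝒳 → ℝ) : ℝ :=
  (∑ x, W x y ^ (1 / σ) * QX x ^ (τ / σ) * V x ^ (-(τ / σ))) ^ σ

/-- `Θ(Q_{XX'}, R)`. -/
noncomputable def Theta (W : 𝒳 → 𝒴 → ℝ) (QX : 𝒳 → ℝ) (QXX' : 𝒳 → 𝒳 → ℝ)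
    (R : ℝ) : EReal :=
  ⨆ ρ : {ρ : ℝ // 0 ≤ ρ}, ⨅ σ : {σ : ℝ // 0 < σ}, ⨅ τ : {τ : ℝ // 0 ≤ τ},
    ⨅ V : {V : 𝒳 → ℝ // IsPosPMF V},
    ((ρ.1 * σ.1 * (R - ent QX) - ∑ x, ∑ x', QXX' x x' *
      Real.log (∑ y, W x y * W x' y ^ ρ.1 * Gfun W QX y σ.1 τ.1 V.1 ^ (-ρ.1)) : ℝ) : EReal)


/-!
For fixed `μ` and `V`, write `I_Q(X;Y) - I_Q(X';Y) = H_Q(Y|X') - H_Q(Y|X)`. Gibbs' inequality gives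
`-H_Q(Y|X) ≥ E_Q[log V(Y|X)]`, while `-H_Q(Y|X')` is the supremum of `E_Q[log V'(Y|X')]` over
strictly positive `V'`: the true conditional pmf is optimal, and mixing it with a little of any
positive conditional pmf makes it admissible. So, up to an arbitrarily small error, the functional
minimised in `Λ` is at least `-E_Q[log (W V'^μ V^(-μ))] - H_Q(Y|X,X')` for a suitable `V'`, and the
log-sum inequality, applied in `y` for each pair `(x, x')`, removes `Q_{Y|XX'}`.
-/

open scoped Topology

section LogSum

variable {ι : Type*} [Fintype ι]

lemma sub_le_mul_log_div {p b : ℝ} (hp : 0 ≤ p) (hb : 0 < b) : p - b ≤ p * Real.log (p / b) := by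
  have h := mul_nonneg hb.le (InformationTheory.klFun_nonneg (div_nonneg hp hb.le))
  have h_expand : b * InformationTheory.klFun (p / b) = p * Real.log (p / b) + b - p := by
    rw [InformationTheory.klFun]
    field_simp
  linarith

lemma sum_mul_log_sub_le_sum_mul_log_sum {p a : ι → ℝ} (hp : ∀ i, 0 ≤ p i) (ha : ∀ i, 0 < a i) :
    ∑ i, p i * Real.log (a i) - ∑ i, p i * Real.log (p i / ∑ j, p j) ≤
      (∑ i, p i) * Real.log (∑ i, a i) := by
  rcases (Finset.sum_nonneg fun i _ => hp i).eq_or_lt with hm | hm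
  · have hp_zero (i : ι) : p i = 0 :=
      (Finset.sum_eq_zero_iff_of_nonneg fun i _ => hp i).1 hm.symm i (Finset.mem_univ i)
    simp [hp_zero]
  set m := ∑ i, p i with hm_def
  set S := ∑ i, a i with hS_def
  have hS : 0 < S := Finset.sum_pos (fun i _ => ha i) (Finset.nonempty_of_sum_ne_zero hm.ne')
  have hterm (i : ι) : p i - m * a i / S ≤
      p i * Real.log (p i / m) + p i * Real.log S - p i * Real.log (a i) := by
    rcases (hp i).eq_or_lt with hi | hi
    · have := ha i
      simp only [← hi, zero_mul, zero_sub, add_zero, sub_zero, neg_nonpos]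
      positivity
    · have hb : 0 < m * a i / S := div_pos (mul_pos hm (ha i)) hS
      have hlog : Real.log (p i / (m * a i / S)) =
          Real.log (p i / m) + Real.log S - Real.log (a i) := by
        rw [Real.log_div hi.ne' hb.ne', Real.log_div (mul_pos hm (ha i)).ne' hS.ne',
          Real.log_mul hm.ne' (ha i).ne', Real.log_div hi.ne' hm.ne']
        ring
      calc p i - m * a i / S ≤ p i * Real.log (p i / (m * a i / S)) :=
            sub_le_mul_log_div hi.le hb
        _ = _ := by rw [hlog]; ring
  have hzero : ∑ i, (p i - m * a i / S) = 0 := by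
    rw [Finset.sum_sub_distrib, ← Finset.sum_div, ← Finset.mul_sum, ← hm_def, ← hS_def,
      mul_div_cancel_right₀ _ hS.ne', sub_self]
  have hsum := Finset.sum_le_sum fun i (_ : i ∈ Finset.univ) => hterm i
  rw [hzero, Finset.sum_sub_distrib, Finset.sum_add_distrib, ← Finset.sum_mul] at hsum
  linarith

end LogSum

section ConditionalEntropy

variable {A V : 𝒳 → 𝒴 → ℝ}

omit [Fintype 𝒳] in
lemma le_margX (hA : ∀ x y, 0 ≤ A x y) (x : 𝒳) (y : 𝒴) : A x y ≤ margX A x :=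
  Finset.single_le_sum (fun y _ => hA x y) (Finset.mem_univ y)

omit [Fintype 𝒴] in
lemma le_margY (hA : ∀ x y, 0 ≤ A x y) (x : 𝒳) (y : 𝒴) : A x y ≤ margY A y :=
  Finset.single_le_sum (f := fun x => A x y) (fun x _ => hA x y) (Finset.mem_univ x)

lemma mutInf_eq_ent_sub_condEntYX (hA : ∀ x y, 0 ≤ A x y) :
    mutInf A = ent (margY A) - condEntYX A := by
  have hterm (x : 𝒳) (y : 𝒴) : A x y * Real.log (A x y / (margX A x * margY A y)) =
      A x y * Real.log (A x y / margX A x) - A x y * Real.log (margY A y) := by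
    rcases (hA x y).eq_or_lt with h | h
    · simp [← h]
    · have hx := h.trans_le (le_margX hA x y)
      have hy := h.trans_le (le_margY hA x y)
      rw [← div_div, Real.log_div (div_pos h hx).ne' hy.ne', mul_sub]
  have hY : ∑ x, ∑ y, A x y * Real.log (margY A y) = ∑ y, margY A y * Real.log (margY A y) := by
    rw [Finset.sum_comm]
    simp only [← Finset.sum_mul, margY]
  simp only [mutInf, ent, condEntYX, hterm, Finset.sum_sub_distrib, hY]
  ring

lemma gML_le_neg_condEntYX (hA : ∀ x y, 0 ≤ A x y) (hV : ∀ x, IsPosPMF (V x)) :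
    gML V A ≤ -condEntYX A := by
  rw [condEntYX, neg_neg]
  refine Finset.sum_le_sum fun x _ => ?_
  have h := sum_mul_log_sub_le_sum_mul_log_sum (hA x) (hV x).1
  rwa [(hV x).2, Real.log_one, mul_zero, sub_nonpos] at h

/-- The conditional pmf of the second coordinate given the first under a joint pmf `A`. On rows of
mass zero, where `A x y / margX A x` would be the junk value `0`, it is `V` instead, so that every
row is a pmf. -/
noncomputable def condPMF (A V : 𝒳 → 𝒴 → ℝ) (x : 𝒳) : 𝒴 → ℝ :=
  if margX A x = 0 then V x else fun y => A x y / margX A x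

lemma IsPosPMF.isPMF {α : Type*} [Fintype α] {p : α → ℝ} (hp : IsPosPMF p) : IsPMF p :=
  ⟨fun a => (hp.1 a).le, hp.2⟩

omit [Fintype 𝒳] in
lemma isPMF_condPMF (hA : ∀ x y, 0 ≤ A x y) (hV : ∀ x, IsPMF (V x)) (x : 𝒳) :
    IsPMF (condPMF A V x) := by
  unfold condPMF
  split_ifs with hx
  · exact hV x
  · refine ⟨fun y => div_nonneg (hA x y) (Finset.sum_nonneg fun y _ => hA x y), ?_⟩
    rw [← Finset.sum_div]
    exact div_self hx

lemma IsPMF.mix {α : Type*} [Fintype α] {p q : α → ℝ} (hp : IsPMF p) (hq : IsPosPMF q) {s : ℝ}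
    (hs₀ : 0 ≤ s) (hs₁ : s < 1) : IsPosPMF fun a => s * p a + (1 - s) * q a := by
  refine ⟨fun a => ?_, ?_⟩
  · exact add_pos_of_nonneg_of_pos (mul_nonneg hs₀ (hp.1 a)) (mul_pos (sub_pos.2 hs₁) (hq.1 a))
  · rw [Finset.sum_add_distrib, ← Finset.mul_sum, ← Finset.mul_sum, hp.2, hq.2]
    ring

lemma log_mul_sum_sub_condEntYX_le_gML_mix (hA : ∀ x y, 0 ≤ A x y) (hV : ∀ x y, 0 ≤ V x y) {s : ℝ}
    (hs₀ : 0 < s) (hs₁ : s ≤ 1) :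
    Real.log s * ∑ x, ∑ y, A x y - condEntYX A ≤
      gML (fun x y => s * condPMF A V x y + (1 - s) * V x y) A := by
  rw [condEntYX, sub_neg_eq_add]
  simp only [gML, Finset.mul_sum, ← Finset.sum_add_distrib]
  refine Finset.sum_le_sum fun x _ => Finset.sum_le_sum fun y _ => ?_
  rcases (hA x y).eq_or_lt with h | h
  · simp [← h]
  have hx := h.trans_le (le_margX hA x y)
  have hcond : condPMF A V x y = A x y / margX A x := by rw [condPMF, if_neg hx.ne']
  calc Real.log s * A x y + A x y * Real.log (A x y / margX A x)
      = A x y * Real.log (s * (A x y / margX A x)) := by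
        rw [Real.log_mul hs₀.ne' (div_pos h hx).ne']
        ring
    _ ≤ A x y * Real.log (s * condPMF A V x y + (1 - s) * V x y) := by
        rw [hcond]
        gcongr
        exact le_add_of_nonneg_right (mul_nonneg (sub_nonneg.2 hs₁) (hV x y))

theorem isLUB_gML (hA : ∀ x y, 0 ≤ A x y)
    (hne : {V : 𝒳 → 𝒴 → ℝ | ∀ x, IsPosPMF (V x)}.Nonempty) :
    IsLUB ((fun V => gML V A) '' {V | ∀ x, IsPosPMF (V x)}) (-condEntYX A) := by
  obtain ⟨V, hV⟩ := hne
  refine ⟨Set.forall_mem_image.2 fun V hV => gML_le_neg_condEntYX hA hV, fun b hb => ?_⟩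
  have hmix : ∀ᶠ s in 𝓝[<] (1 : ℝ), Real.log s * ∑ x, ∑ y, A x y - condEntYX A ≤ b := by
    filter_upwards [Ioo_mem_nhdsLT one_pos] with s hs
    refine (log_mul_sum_sub_condEntYX_le_gML_mix hA (fun x y => ((hV x).1 y).le) hs.1
      hs.2.le).trans (hb ⟨_, fun x => ?_, rfl⟩)
    exact (isPMF_condPMF hA (fun x => (hV x).isPMF) x).mix (hV x) hs.1.le hs.2
  have hlim : Tendsto (fun s => Real.log s * ∑ x, ∑ y, A x y - condEntYX A) (𝓝[<] 1)
      (𝓝 (-condEntYX A)) := by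
    have hlog := (Real.continuousAt_log one_ne_zero).tendsto.mono_left
      (nhdsWithin_le_nhds (s := Set.Iio 1))
    simpa using (hlog.mul_const _).sub_const _
  exact le_of_tendsto hlim hmix

end ConditionalEntropy

section Triples

variable {Q : 𝒳 → 𝒳 → 𝒴 → ℝ} {W V V' : 𝒳 → 𝒴 → ℝ}

omit [Fintype 𝒴] in
lemma margXY3_nonneg (hQ : ∀ x x' y, 0 ≤ Q x x' y) (x : 𝒳) (y : 𝒴) : 0 ≤ margXY3 Q x y :=
  Finset.sum_nonneg fun x' _ => hQ x x' y

omit [Fintype 𝒴] in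
lemma margX'Y3_nonneg (hQ : ∀ x x' y, 0 ≤ Q x x' y) (x' : 𝒳) (y : 𝒴) : 0 ≤ margX'Y3 Q x' y :=
  Finset.sum_nonneg fun x _ => hQ x x' y

omit [Fintype 𝒴] in
lemma margY_margX'Y3 (Q : 𝒳 → 𝒳 → 𝒴 → ℝ) : margY (margX'Y3 Q) = margY (margXY3 Q) :=
  funext fun _ => Finset.sum_comm

lemma mutInf_margXY3_sub_mutInf_margX'Y3 (hQ : ∀ x x' y, 0 ≤ Q x x' y) :
    mutInf (margXY3 Q) - mutInf (margX'Y3 Q) = condEntYX (margX'Y3 Q) - condEntYX (margXY3 Q) := by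
  rw [mutInf_eq_ent_sub_condEntYX (margXY3_nonneg hQ),
    mutInf_eq_ent_sub_condEntYX (margX'Y3_nonneg hQ), margY_margX'Y3]
  ring

lemma gML_margXY3 (V : 𝒳 → 𝒴 → ℝ) (Q : 𝒳 → 𝒳 → 𝒴 → ℝ) :
    gML V (margXY3 Q) = ∑ x, ∑ x', ∑ y, Q x x' y * Real.log (V x y) := by
  refine Finset.sum_congr rfl fun x _ => ?_
  rw [Finset.sum_comm]
  simp only [margXY3, Finset.sum_mul]

lemma gML_margX'Y3 (V' : 𝒳 → 𝒴 → ℝ) (Q : 𝒳 → 𝒳 → 𝒴 → ℝ) :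
    gML V' (margX'Y3 Q) = ∑ x, ∑ x', ∑ y, Q x x' y * Real.log (V' x' y) :=
  (gML_margXY3 V' fun x' x => Q x x').trans Finset.sum_comm

lemma sum_mul_log_add_condEntY3_le (hQ : ∀ x x' y, 0 ≤ Q x x' y) {a : 𝒳 → 𝒳 → 𝒴 → ℝ}
    (ha : ∀ x x' y, 0 < a x x' y) :
    ∑ x, ∑ x', ∑ y, Q x x' y * Real.log (a x x' y) + condEntY3 Q ≤
      ∑ x, ∑ x', (∑ y, Q x x' y) * Real.log (∑ y, a x x' y) := by
  simp only [condEntY3, ← sub_eq_add_neg, ← Finset.sum_sub_distrib (G := ℝ)]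
  exact Finset.sum_le_sum fun x _ => Finset.sum_le_sum fun x' _ => by
    simpa only [Finset.sum_sub_distrib] using
      sum_mul_log_sub_le_sum_mul_log_sum (hQ x x') (ha x x')

/-- The quantity `-∑ Q(x,x') log ∑_y W(y|x) V'(y|x')^μ V(y|x)^(-μ)` bounding `Λ` in (C.10). -/
noncomputable def tiltedExponent (W : 𝒳 → 𝒴 → ℝ) (QXX' : 𝒳 → 𝒳 → ℝ) (μ : ℝ)
    (V V' : 𝒳 → 𝒴 → ℝ) : ℝ :=
  -∑ x, ∑ x', QXX' x x' * Real.log (∑ y, W x y * V' x' y ^ μ * V x y ^ (-μ))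

/-- The functional of `Q_{XX'Y}` that is minimised over `Q_{Y|XX'}` in `Λ`, at multiplier `μ`. -/
noncomputable def lagrangian (W : 𝒳 → 𝒴 → ℝ) (μ : ℝ) (Q : 𝒳 → 𝒳 → 𝒴 → ℝ) : ℝ :=
  obj W Q + μ * (mutInf (margXY3 Q) - mutInf (margX'Y3 Q))

lemma tiltedExponent_le_obj_add (hQ : ∀ x x' y, 0 ≤ Q x x' y) (hW : ∀ x y, 0 < W x y)
    (hV : ∀ x y, 0 < V x y) (hV' : ∀ x y, 0 < V' x y) (μ : ℝ) :
    tiltedExponent W (fun x x' => ∑ y, Q x x' y) μ V V' ≤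
      obj W Q + μ * (gML V (margXY3 Q) - gML V' (margX'Y3 Q)) := by
  have hpos (x x' : 𝒳) (y : 𝒴) : 0 < W x y * V' x' y ^ μ * V x y ^ (-μ) := by
    have := hW x y
    have := hV x y
    have := hV' x' y
    positivity
  have hlog (x x' : 𝒳) (y : 𝒴) : Real.log (W x y * V' x' y ^ μ * V x y ^ (-μ)) =
      Real.log (W x y) + μ * Real.log (V' x' y) - μ * Real.log (V x y) := by
    have hVμ := Real.rpow_pos_of_pos (hV x y) (-μ)
    have hV'μ := Real.rpow_pos_of_pos (hV' x' y) μ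
    rw [Real.log_mul (mul_pos (hW x y) hV'μ).ne' hVμ.ne', Real.log_mul (hW x y).ne' hV'μ.ne',
      Real.log_rpow (hV x y), Real.log_rpow (hV' x' y)]
    ring
  have h := sum_mul_log_add_condEntY3_le hQ hpos
  simp only [hlog, mul_sub, mul_add, mul_left_comm _ μ, Finset.sum_sub_distrib,
    Finset.sum_add_distrib, ← Finset.mul_sum] at h
  rw [tiltedExponent, obj, gML_margXY3, gML_margX'Y3]
  linarith

lemma exists_tiltedExponent_le_lagrangian_add (hQ : ∀ x x' y, 0 ≤ Q x x' y)
    (hW : ∀ x y, 0 < W x y) (hV : ∀ x, IsPosPMF (V x)) {μ ε : ℝ} (hμ : 0 ≤ μ) (hε : 0 < ε) :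
    ∃ V' : 𝒳 → 𝒴 → ℝ, (∀ x, IsPosPMF (V' x)) ∧
      tiltedExponent W (fun x x' => ∑ y, Q x x' y) μ V V' ≤ lagrangian W μ Q + ε := by
  have hδ : 0 < ε / (μ + 1) := by positivity
  have hμδ : μ * (ε / (μ + 1)) ≤ ε := by
    rw [mul_div_left_comm]
    exact mul_le_of_le_one_right hε.le ((div_le_one (by positivity)).2 (by linarith))
  have hV_le : gML V (margXY3 Q) ≤ -condEntYX (margXY3 Q) :=
    gML_le_neg_condEntYX (margXY3_nonneg hQ) hV
  obtain ⟨_, ⟨V', hV', rfl⟩, hV'_gt⟩ :=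
    (lt_isLUB_iff (isLUB_gML (margX'Y3_nonneg hQ) ⟨V, hV⟩)).1 (sub_lt_self _ hδ)
  refine ⟨V', hV', ?_⟩
  calc tiltedExponent W (fun x x' => ∑ y, Q x x' y) μ V V'
      ≤ obj W Q + μ * (gML V (margXY3 Q) - gML V' (margX'Y3 Q)) :=
        tiltedExponent_le_obj_add hQ hW (fun x => (hV x).1) (fun x' => (hV' x').1) μ
    _ ≤ obj W Q + μ * (mutInf (margXY3 Q) - mutInf (margX'Y3 Q) + ε / (μ + 1)) := by
        rw [mutInf_margXY3_sub_mutInf_margX'Y3 hQ]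
        gcongr
        linarith
    _ ≤ lagrangian W μ Q + ε := by
        rw [lagrangian]
        linarith

end Triples

omit [Fintype 𝒳] in
lemma sum_jointQ (QXX' : 𝒳 → 𝒳 → ℝ) {Qc : 𝒳 → 𝒳 → 𝒴 → ℝ} (hQc : ∀ x x', ∑ y, Qc x x' y = 1)
    (x x' : 𝒳) : ∑ y, jointQ QXX' Qc x x' y = QXX' x x' := by
  simp only [jointQ, ← Finset.mul_sum, hQc, mul_one]

theorem Lambda_lower_bound_general (W : 𝒳 → 𝒴 → ℝ) (hW : ∀ x y, 0 < W x y)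
    (QXX' : 𝒳 → 𝒳 → ℝ) (hQ : ∀ x x', 0 ≤ QXX' x x') :
    Lambda W QXX' ≥
      ⨆ μ : {μ : ℝ // 0 ≤ μ}, ⨆ V : {V : 𝒳 → 𝒴 → ℝ // ∀ x, IsPosPMF (V x)},
        ⨅ V' : {V' : 𝒳 → 𝒴 → ℝ // ∀ x', IsPosPMF (V' x')},
          ((-∑ x, ∑ x', QXX' x x' *
            Real.log (∑ y, W x y * V'.1 x' y ^ μ.1 * V.1 x y ^ (-μ.1)) : ℝ) : EReal) := by
  refine iSup_mono fun ⟨μ, hμ⟩ => iSup_le fun ⟨V, hV⟩ => le_iInf fun ⟨Qc, hQc⟩ => ?_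
  refine EReal.le_of_forall_lt_iff_le.1 fun z hz => ?_
  have hgap : 0 < z - lagrangian W μ (jointQ QXX' Qc) := sub_pos.2 (EReal.coe_lt_coe_iff.1 hz)
  have hJ : ∀ x x' y, 0 ≤ jointQ QXX' Qc x x' y :=
    fun x x' y => mul_nonneg (hQ x x') ((hQc x x').1 y)
  obtain ⟨V', hV', hle⟩ := exists_tiltedExponent_le_lagrangian_add hJ hW hV hμ hgap
  simp only [sum_jointQ QXX' fun x x' => (hQc x x').2, add_sub_cancel] at hle
  exact iInf_le_of_le ⟨V', hV'⟩ (EReal.coe_le_coe hle)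

/-- **Appendix C, eq. (C.10):** a sup-inf lower bound on `Λ(Q_{XX'})`. -/
theorem Lambda_lower_bound {𝒳 𝒴 : Type*} [Fintype 𝒳] [Fintype 𝒴]
    [Nonempty 𝒳] [Nonempty 𝒴]
    (W : 𝒳 → 𝒴 → ℝ) (hW : IsChannel W)
    (QXX' : 𝒳 → 𝒳 → ℝ) (hQ : IsJointPMF QXX') :
    Lambda W QXX' ≥
      ⨆ μ : {μ : ℝ // 0 ≤ μ}, ⨆ V : {V : 𝒳 → 𝒴 → ℝ // ∀ x, IsPosPMF (V x)},
        ⨅ V' : {V' : 𝒳 → 𝒴 → ℝ // ∀ x', IsPosPMF (V' x')},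
          ((-∑ x, ∑ x', QXX' x x' *
            Real.log (∑ y, W x y * V'.1 x' y ^ μ.1 * V.1 x y ^ (-μ.1)) : ℝ) : EReal) :=
  Lambda_lower_bound_general W (fun x => (hW x).1) QXX' hQ.1

end EE
end

section
/- (Appendix D, eqs. (D.5)–(D.13)) Let W be a channel from 𝒳 to 𝒴, let R be a real number, and let Q_{XX'} be a pmf on 𝒳 × 𝒳. Then Φ(Q_{XX'},R) ≥ sup_{μ ≥ 0} { μR + sup over strictly positive pmfs U on 𝒴 inf over strictly positive conditional pmfs U'(·|x') on 𝒴 of ( −∑_{x,x'} Q_{XX'}(x,x') log [ ∑_y W(y|x) U'(y|x')^{μ} U(y)^{−μ} ] ) }. -/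
/-!
By Gibbs' variational principle, `-log ∑_y a(y)` is the minimum over pmfs `p` of
`∑ p log p - ∑ p log a`. Taking `a(y) = W(y|x) U'(y|x')^μ U(y)^(-μ)` and `p = Q_{Y|XX'}(·|x,x')` and
averaging over `Q_{XX'}`, the bracketed expression is at most
`-E log W(Y|X) - H(Y|X,X') - μ E log (U'(Y|X') / U(Y))`. Since `I(X';Y) = H(Y) - H(Y|X')`,
the last expectation is at least `I(X';Y)` when `U' = Q_{Y|X'}`, whatever `U` is, by Gibbs'
inequality for `H(Y)`. A strictly positive `U'` gets arbitrarily close to `Q_{Y|X'}`.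
-/

open Real BigOperators Filter

namespace EE

variable {𝒳 𝒴 : Type*} [Fintype 𝒳] [Fintype 𝒴]

section PMF

variable {α : Type*} [Fintype α] {p u a : α → ℝ}

theorem isPosPMF_uniform [Nonempty α] : IsPosPMF fun _ : α => (Fintype.card α : ℝ)⁻¹ :=
  ⟨fun _ => by positivity, by simp⟩

theorem IsPMF.isPosPMF_convexCombination (hp : IsPMF p) (hu : IsPosPMF u) {c : ℝ} (hc₀ : 0 ≤ c)
    (hc₁ : c < 1) : IsPosPMF fun i => c * p i + (1 - c) * u i := by
  refine ⟨fun i => add_pos_of_nonneg_of_pos (mul_nonneg hc₀ (hp.1 i))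
    (mul_pos (sub_pos.2 hc₁) (hu.1 i)), ?_⟩
  rw [Finset.sum_add_distrib, ← Finset.mul_sum, ← Finset.mul_sum, hp.2, hu.2]
  ring

/- Jensen's inequality is applied to `exp` because for `log` the point `a / p` would leave
the domain `(0, ∞)` where `p` vanishes. -/
theorem IsPMF.ent_add_sum_mul_log_le_log_sum (hp : IsPMF p) (ha : ∀ i, 0 < a i) :
    ent p + ∑ i, p i * Real.log (a i) ≤ Real.log (∑ i, a i) := by
  have weighted_exp_le (i : α) : p i * Real.exp (Real.log (a i) - Real.log (p i)) ≤ a i := by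
    rcases (hp.1 i).eq_or_lt with h | h
    · simpa [← h] using (ha i).le
    · rw [Real.exp_sub, Real.exp_log (ha i), Real.exp_log h, mul_div_cancel₀ _ h.ne']
  have exp_le : Real.exp (∑ i, p i * (Real.log (a i) - Real.log (p i))) ≤ ∑ i, a i :=
    (convexOn_exp.map_sum_le (fun i _ => hp.1 i) hp.2 fun _ _ => Set.mem_univ _).trans
      (Finset.sum_le_sum fun i _ => weighted_exp_le i)
  calc ent p + ∑ i, p i * Real.log (a i)
      = ∑ i, p i * (Real.log (a i) - Real.log (p i)) := by
        simp only [ent, mul_sub, Finset.sum_sub_distrib]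
        ring
    _ ≤ Real.log (∑ i, a i) := by
        simpa only [Real.log_exp] using Real.log_le_log (Real.exp_pos _) exp_le

theorem IsPMF.ent_le_neg_sum_mul_log (hp : IsPMF p) (hu : IsPosPMF u) :
    ent p ≤ -∑ i, p i * Real.log (u i) := by
  have h := hp.ent_add_sum_mul_log_le_log_sum hu.1
  rw [hu.2, Real.log_one] at h
  linarith

/- The pmf `f / ∑ f`, which maximises `∑ f log u` over `u`, may have zeros, so it is
mixed with a little of the uniform pmf; this costs at most `δ` in each logarithm. -/
theorem exists_isPosPMF_sum_mul_log_div_sum_le [Nonempty α] {f : α → ℝ} (hf : ∀ i, 0 ≤ f i)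
    {δ : ℝ} (hδ : 0 < δ) :
    ∃ u, IsPosPMF u ∧
      ∑ i, f i * Real.log (f i / ∑ j, f j) ≤ ∑ i, f i * (Real.log (u i) + δ) := by
  rcases (Finset.sum_nonneg fun i _ => hf i : 0 ≤ ∑ i, f i).eq_or_lt with h | hsum
  · have hzero (i : α) : f i = 0 :=
      (Finset.sum_eq_zero_iff_of_nonneg fun i _ => hf i).1 h.symm i (Finset.mem_univ i)
    exact ⟨_, isPosPMF_uniform, by simp [hzero]⟩
  have normalized : IsPMF fun i => f i / ∑ j, f j :=
    ⟨fun i => div_nonneg (hf i) hsum.le, by rw [← Finset.sum_div, div_self hsum.ne']⟩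
  have hexp : Real.exp (-δ) < 1 := Real.exp_lt_one_iff.2 (neg_lt_zero.2 hδ)
  refine ⟨_, normalized.isPosPMF_convexCombination isPosPMF_uniform (Real.exp_pos _).le hexp,
    Finset.sum_le_sum fun i _ => ?_⟩
  rcases (hf i).eq_or_lt with h | hi
  · simp [← h]
  have hdiv : 0 < f i / ∑ j, f j := div_pos hi hsum
  refine mul_le_mul_of_nonneg_left ?_ hi.le
  calc Real.log (f i / ∑ j, f j)
      = Real.log (Real.exp (-δ) * (f i / ∑ j, f j)) + δ := by
        rw [Real.log_mul (Real.exp_pos _).ne' hdiv.ne', Real.log_exp]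
        ring
    _ ≤ Real.log (Real.exp (-δ) * (f i / ∑ j, f j) +
          (1 - Real.exp (-δ)) * (Fintype.card α : ℝ)⁻¹) + δ := by
        gcongr
        exact le_add_of_nonneg_right (mul_nonneg (sub_nonneg.2 hexp.le) (isPosPMF_uniform.1 i).le)

end PMF

section MutualInformation

variable {q : 𝒳 → 𝒴 → ℝ}

theorem IsJointPMF.isPMF_margY (hq : IsJointPMF q) : IsPMF (margY q) :=
  ⟨fun y => Finset.sum_nonneg fun x _ => hq.1 x y, Finset.sum_comm.trans hq.2⟩

theorem sum_margY_mul (q : 𝒳 → 𝒴 → ℝ) (f : 𝒴 → ℝ) :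
    ∑ y, margY q y * f y = ∑ x, ∑ y, q x y * f y := by
  rw [Finset.sum_comm]
  simp only [margY, Finset.sum_mul]

theorem mutInf_eq_ent_margY_sub_condEntYX (hq : ∀ x y, 0 ≤ q x y) :
    mutInf q = ent (margY q) - condEntYX q := by
  have log_split (x : 𝒳) (y : 𝒴) : q x y * Real.log (q x y / (margX q x * margY q y)) =
      q x y * Real.log (q x y / margX q x) - q x y * Real.log (margY q y) := by
    rcases (hq x y).eq_or_lt with h | h
    · simp [← h]
    have hx : 0 < margX q x :=
      h.trans_le (Finset.single_le_sum (fun y _ => hq x y) (Finset.mem_univ y))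
    have hy : 0 < margY q y :=
      h.trans_le (Finset.single_le_sum (fun x _ => hq x y) (Finset.mem_univ x))
    rw [← div_div, Real.log_div (div_pos h hx).ne' hy.ne', mul_sub]
  simp only [mutInf, condEntYX, ent, sum_margY_mul, log_split, Finset.sum_sub_distrib]
  ring

theorem IsJointPMF.exists_neg_sum_mul_log_le_condEntYX_add [Nonempty 𝒴] (hq : IsJointPMF q)
    {δ : ℝ} (hδ : 0 < δ) :
    ∃ U' : 𝒳 → 𝒴 → ℝ, (∀ x, IsPosPMF (U' x)) ∧
      -∑ x, ∑ y, q x y * Real.log (U' x y) ≤ condEntYX q + δ := by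
  choose U' hU' hrow using fun x => exists_isPosPMF_sum_mul_log_div_sum_le (hq.1 x) hδ
  refine ⟨U', hU', ?_⟩
  have hsum := Finset.sum_le_sum fun x (_ : x ∈ Finset.univ) => hrow x
  simp only [mul_add, Finset.sum_add_distrib, ← Finset.sum_mul, hq.2, one_mul] at hsum
  simp only [condEntYX, margX]
  linarith

theorem IsJointPMF.exists_mutInf_le_sum_mul_log_sub_log_add [Nonempty 𝒴] (hq : IsJointPMF q)
    {U : 𝒴 → ℝ} (hU : IsPosPMF U) {δ : ℝ} (hδ : 0 < δ) :
    ∃ U' : 𝒳 → 𝒴 → ℝ, (∀ x, IsPosPMF (U' x)) ∧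
      mutInf q ≤ ∑ x, ∑ y, q x y * (Real.log (U' x y) - Real.log (U y)) + δ := by
  obtain ⟨U', hU', hcond⟩ := hq.exists_neg_sum_mul_log_le_condEntYX_add hδ
  refine ⟨U', hU', ?_⟩
  have hent := hq.isPMF_margY.ent_le_neg_sum_mul_log hU
  rw [sum_margY_mul] at hent
  simp only [mutInf_eq_ent_margY_sub_condEntYX hq.1, mul_sub, Finset.sum_sub_distrib]
  linarith

end MutualInformation

section Triple

theorem sum_margX'Y3_mul (Q : 𝒳 → 𝒳 → 𝒴 → ℝ) (f : 𝒳 → 𝒴 → ℝ) :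
    ∑ x', ∑ y, margX'Y3 Q x' y * f x' y = ∑ x, ∑ x', ∑ y, Q x x' y * f x' y := by
  simp only [margX'Y3, Finset.sum_mul]
  rw [Finset.sum_comm (f := fun x x' => ∑ y, Q x x' y * f x' y)]
  exact Finset.sum_congr rfl fun x' _ => Finset.sum_comm

theorem IsJointPMF3.isJointPMF_margX'Y3 {Q : 𝒳 → 𝒳 → 𝒴 → ℝ} (hQ : IsJointPMF3 Q) :
    IsJointPMF (margX'Y3 Q) :=
  ⟨fun x' y => Finset.sum_nonneg fun x _ => hQ.1 x x' y, by
    simpa only [mul_one, hQ.2] using sum_margX'Y3_mul Q fun _ _ => 1⟩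

variable {W : 𝒳 → 𝒴 → ℝ} {QXX' : 𝒳 → 𝒳 → ℝ} {Qc : 𝒳 → 𝒳 → 𝒴 → ℝ}

theorem IsJointPMF.isJointPMF3_jointQ (hQ : IsJointPMF QXX') (hQc : ∀ x x', IsPMF (Qc x x')) :
    IsJointPMF3 (jointQ QXX' Qc) :=
  ⟨fun x x' y => mul_nonneg (hQ.1 x x') ((hQc x x').1 y), by
    simp only [jointQ, ← Finset.mul_sum, fun x x' => (hQc x x').2, mul_one, hQ.2]⟩

theorem obj_jointQ (W : 𝒳 → 𝒴 → ℝ) (QXX' : 𝒳 → 𝒳 → ℝ) (hQc : ∀ x x', ∑ y, Qc x x' y = 1) :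
    obj W (jointQ QXX' Qc) =
      -∑ x, ∑ x', QXX' x x' * (ent (Qc x x') + ∑ y, Qc x x' y * Real.log (W x y)) := by
  have cond_eq (x x' : 𝒳) (y : 𝒴) :
      QXX' x x' * Qc x x' y * Real.log (QXX' x x' * Qc x x' y / QXX' x x') =
        QXX' x x' * (Qc x x' y * Real.log (Qc x x' y)) := by
    by_cases h : QXX' x x' = 0
    · simp [h]
    · rw [mul_div_cancel_left₀ _ h, mul_assoc]
  simp only [obj, condEntY3, jointQ, ← Finset.mul_sum, hQc, mul_one, cond_eq]
  simp only [ent, mul_assoc, ← Finset.mul_sum, mul_add, mul_neg, Finset.sum_add_distrib,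
    Finset.sum_neg_distrib]
  ring

theorem neg_sum_mul_log_le_obj_sub (hW : ∀ x y, 0 < W x y) (hQ : ∀ x x', 0 ≤ QXX' x x')
    (hQc : ∀ x x', IsPMF (Qc x x')) {U : 𝒴 → ℝ} (hU : ∀ y, 0 < U y) {U' : 𝒳 → 𝒴 → ℝ}
    (hU' : ∀ x' y, 0 < U' x' y) (μ : ℝ) :
    -∑ x, ∑ x', QXX' x x' * Real.log (∑ y, W x y * U' x' y ^ μ * U y ^ (-μ)) ≤
      obj W (jointQ QXX' Qc) - μ * ∑ x', ∑ y, margX'Y3 (jointQ QXX' Qc) x' y *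
        (Real.log (U' x' y) - Real.log (U y)) := by
  have log_weight (x x' : 𝒳) (y : 𝒴) : Real.log (W x y * U' x' y ^ μ * U y ^ (-μ)) =
      Real.log (W x y) + μ * (Real.log (U' x' y) - Real.log (U y)) := by
    have hu' := Real.rpow_pos_of_pos (hU' x' y) μ
    have hu := Real.rpow_pos_of_pos (hU y) (-μ)
    rw [Real.log_mul (mul_pos (hW x y) hu').ne' hu.ne', Real.log_mul (hW x y).ne' hu'.ne',
      Real.log_rpow (hU' x' y), Real.log_rpow (hU y)]
    ring
  have gibbs (x x' : 𝒳) :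
      QXX' x x' * (ent (Qc x x') + ∑ y, Qc x x' y * Real.log (W x y)) +
        μ * ∑ y, jointQ QXX' Qc x x' y * (Real.log (U' x' y) - Real.log (U y)) ≤
      QXX' x x' * Real.log (∑ y, W x y * U' x' y ^ μ * U y ^ (-μ)) := by
    have h := (hQc x x').ent_add_sum_mul_log_le_log_sum fun y =>
      mul_pos (mul_pos (hW x y) (Real.rpow_pos_of_pos (hU' x' y) μ))
        (Real.rpow_pos_of_pos (hU y) (-μ))
    refine le_of_eq_of_le ?_ (mul_le_mul_of_nonneg_left h (hQ x x'))
    simp only [log_weight, jointQ, mul_add, Finset.sum_add_distrib, Finset.mul_sum, add_assoc]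
    congr! 3
    ring
  have hsum := Finset.sum_le_sum fun x (_ : x ∈ Finset.univ) =>
    Finset.sum_le_sum fun x' (_ : x' ∈ Finset.univ) => gibbs x x'
  simp only [Finset.sum_add_distrib, ← Finset.mul_sum] at hsum
  rw [obj_jointQ W QXX' fun x x' => (hQc x x').2, sum_margX'Y3_mul]
  linarith

theorem iInf_neg_sum_mul_log_le_obj_sub_mutInf [Nonempty 𝒴] (hW : ∀ x y, 0 < W x y)
    (hQ : IsJointPMF QXX') (hQc : ∀ x x', IsPMF (Qc x x')) {U : 𝒴 → ℝ} (hU : IsPosPMF U)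
    {μ : ℝ} (hμ : 0 ≤ μ) :
    ⨅ U' : {U' : 𝒳 → 𝒴 → ℝ // ∀ x', IsPosPMF (U' x')},
        ((-∑ x, ∑ x', QXX' x x' *
          Real.log (∑ y, W x y * U'.1 x' y ^ μ * U y ^ (-μ)) : ℝ) : EReal) ≤
      ((obj W (jointQ QXX' Qc) - μ * mutInf (margX'Y3 (jointQ QXX' Qc)) : ℝ) : EReal) := by
  refine EReal.le_of_forall_lt_iff_le.1 fun z hz => ?_
  obtain ⟨δ, hδ, hμδ⟩ := exists_pos_mul_lt (sub_pos.2 (EReal.coe_lt_coe_iff.1 hz)) μ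
  have hq := (hQ.isJointPMF3_jointQ hQc).isJointPMF_margX'Y3
  obtain ⟨U', hU', hI⟩ := hq.exists_mutInf_le_sum_mul_log_sub_log_add hU hδ
  refine iInf_le_of_le ⟨U', hU'⟩ (EReal.coe_le_coe ?_)
  have hbound := neg_sum_mul_log_le_obj_sub hW hQ.1 hQc hU.1 (fun x' => (hU' x').1) μ
  have hμI := mul_le_mul_of_nonneg_left hI hμ
  linarith

end Triple

/-- **Appendix D, eqs. (D.5)–(D.13):** a sup-inf lower bound on `Φ(Q_{XX'},R)`. -/
theorem Phi_lower_bound {𝒳 𝒴 : Type*} [Fintype 𝒳] [Fintype 𝒴]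
    [Nonempty 𝒳] [Nonempty 𝒴]
    (W : 𝒳 → 𝒴 → ℝ) (hW : IsChannel W) (R : ℝ)
    (QXX' : 𝒳 → 𝒳 → ℝ) (hQ : IsJointPMF QXX') :
    Phi W QXX' R ≥
      ⨆ μ : {μ : ℝ // 0 ≤ μ},
        (((μ.1 * R : ℝ) : EReal) +
          ⨆ U : {U : 𝒴 → ℝ // IsPosPMF U},
            ⨅ U' : {U' : 𝒳 → 𝒴 → ℝ // ∀ x', IsPosPMF (U' x')},
              ((-∑ x, ∑ x', QXX' x x' *
                Real.log (∑ y, W x y * U'.1 x' y ^ μ.1 * U.1 y ^ (-μ.1)) : ℝ) : EReal)) := by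
  refine iSup_le fun μ => le_iSup_of_le μ <| le_iInf fun Qc => ?_
  have hU := iSup_le fun U : {U : 𝒴 → ℝ // IsPosPMF U} =>
    iInf_neg_sum_mul_log_le_obj_sub_mutInf (fun x => (hW x).1) hQ Qc.2 U.2 μ.2
  refine (add_le_add_right hU _).trans ?_
  rw [← EReal.coe_add]
  exact EReal.coe_le_coe (by linarith)

end EE
end

section
/- (Appendix D, eqs. (D.18)–(D.24)) Let W be a channel from 𝒳 to 𝒴, let Q_X be a strictly positive pmf on 𝒳, let R ≥ 0, and let Q_{XX'} be a pmf on 𝒳 × 𝒳. Then Θ(Q_{XX'},R) ≤ sup_{ρ ≥ 0} { ρR − ∑_{x,x'} Q_{XX'}(x,x') log [ ∑_y W(y|x) W(y|x')^{ρ} U*(y)^{−ρ} ] }, where U*(y) = ∑_x W(y|x) Q_X(x). -/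
open Real BigOperators Filter

namespace EE

variable {𝒳 𝒴 : Type*} [Fintype 𝒳] [Fintype 𝒴]

/-!
Take `σ = 1`, `τ = 1 / (1 - s)` and `V ∝ Q_X ^ s` with `s < 1`. This makes each summand of `G`
proportional to `W(y|x) Q_X(x)`, and the constant is exactly the exponential of a Rényi entropy:
`G(y, 1, τ, V) = exp (H_s(Q_X)) U*(y)`. Pulling the constant out of the logarithm turns the
objective at rate `R` into the bound at rate `R + H_s(Q_X) - H(Q_X)`, and `H_s → H` as `s → 1`.
-/

open scoped Topology

section Renyi

variable {α : Type*} [Fintype α] {p : α → ℝ}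

/-- The Rényi entropy of order `s` of `p`, in nats. At `s = 1`, where it should be the Shannon
entropy `ent p`, it takes the junk value `0`. -/
noncomputable def renyiEnt (p : α → ℝ) (s : ℝ) : ℝ :=
  (1 - s)⁻¹ * log (∑ a, p a ^ s)

/-- The escort distribution of order `s` of `p`: the pmf proportional to `p ^ s`. -/
noncomputable def escort (p : α → ℝ) (s : ℝ) (a : α) : ℝ :=
  p a ^ s / ∑ b, p b ^ s

theorem IsPosPMF.nonempty (hp : IsPosPMF p) : Nonempty α := by
  by_contra! hα
  simpa using hp.2

theorem sum_rpow_pos [Nonempty α] (hp : ∀ a, 0 < p a) (s : ℝ) : 0 < ∑ a, p a ^ s :=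
  Finset.sum_pos (fun a _ => rpow_pos_of_pos (hp a) s) Finset.univ_nonempty

theorem hasDerivAt_log_sum_rpow [Nonempty α] (hp : ∀ a, 0 < p a) (s : ℝ) :
    HasDerivAt (fun u : ℝ => log (∑ a, p a ^ u))
      ((∑ a, p a ^ s * log (p a)) / ∑ a, p a ^ s) s :=
  (HasDerivAt.fun_sum fun a _ => (hasStrictDerivAt_const_rpow (hp a) s).hasDerivAt).log
    (sum_rpow_pos hp s).ne'

theorem tendsto_renyiEnt_one (hp : IsPosPMF p) :
    Tendsto (renyiEnt p) (𝓝[≠] 1) (𝓝 (ent p)) := by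
  have := hp.nonempty
  have hderiv : HasDerivAt (fun u : ℝ => log (∑ a, p a ^ u)) (-ent p) 1 := by
    simpa [ent, hp.2] using hasDerivAt_log_sum_rpow hp.1 1
  have hslope : renyiEnt p = fun s => -slope (fun u : ℝ => log (∑ a, p a ^ u)) 1 s := by
    funext s
    rw [renyiEnt, ← neg_sub s 1, inv_neg]
    simp [slope_def_module, hp.2]
  simpa [hslope] using hderiv.tendsto_slope.neg

theorem isPosPMF_escort [Nonempty α] (hp : ∀ a, 0 < p a) (s : ℝ) : IsPosPMF (escort p s) := by
  have hZ := sum_rpow_pos hp s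
  refine ⟨fun a => div_pos (rpow_pos_of_pos (hp a) s) hZ, ?_⟩
  simp only [escort, ← Finset.sum_div, div_self hZ.ne']

theorem log_escort (hp : ∀ a, 0 < p a) (s : ℝ) (a : α) :
    log (escort p s a) = s * log (p a) - log (∑ b, p b ^ s) := by
  have : Nonempty α := ⟨a⟩
  rw [escort, log_div (rpow_pos_of_pos (hp a) s).ne' (sum_rpow_pos hp s).ne', log_rpow (hp a)]

theorem rpow_mul_escort_rpow_neg (hp : ∀ a, 0 < p a) {s : ℝ} (hs : s ≠ 1) (a : α) :
    p a ^ (1 - s)⁻¹ * escort p s a ^ (-(1 - s)⁻¹) = exp (renyiEnt p s) * p a := by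
  have : Nonempty α := ⟨a⟩
  have hs' : 1 - s ≠ 0 := sub_ne_zero.mpr hs.symm
  nth_rw 2 [← exp_log (hp a)]
  rw [rpow_def_of_pos (hp a), rpow_def_of_pos ((isPosPMF_escort hp s).1 a), log_escort hp,
    ← exp_add, ← exp_add, renyiEnt]
  congr 1
  field_simp
  ring

end Renyi

section OutputDist

variable {α β : Type*} [Fintype α] {W : α → β → ℝ} {p : α → ℝ}

/-- The output distribution of the channel `W` under the input distribution `p`;
`outputDist W QX` is the paper's `U*`. -/
def outputDist (W : α → β → ℝ) (p : α → ℝ) (y : β) : ℝ :=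
  ∑ x, W x y * p x

theorem outputDist_nonneg (hW : ∀ x y, 0 ≤ W x y) (hp : ∀ x, 0 ≤ p x) (y : β) :
    0 ≤ outputDist W p y :=
  Finset.sum_nonneg fun x _ => mul_nonneg (hW x y) (hp x)

theorem outputDist_pos (hW : ∀ x y, 0 ≤ W x y) (hp : ∀ x, 0 < p x) {x : α} {y : β}
    (hxy : 0 < W x y) : 0 < outputDist W p y :=
  Finset.sum_pos' (fun z _ => mul_nonneg (hW z y) (hp z).le)
    ⟨x, Finset.mem_univ x, mul_pos hxy (hp x)⟩

theorem Gfun_one_escort (W : α → β → ℝ) (hp : ∀ x, 0 < p x) {s : ℝ} (hs : s ≠ 1) (y : β) :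
    Gfun W p y 1 (1 - s)⁻¹ (escort p s) = exp (renyiEnt p s) * outputDist W p y := by
  simp only [Gfun, outputDist, div_one, rpow_one, Finset.mul_sum]
  refine Finset.sum_congr rfl fun x _ => ?_
  rw [mul_assoc, rpow_mul_escort_rpow_neg hp hs, mul_left_comm]

end OutputDist

section Overlap

variable {α β : Type*} [Fintype β] {W : α → β → ℝ} {U : β → ℝ}

/-- The sum over outputs inside the logarithm in `Θ` and in its bound, with a free
function `U` in place of `G` and `U*`. -/
noncomputable def overlap (W : α → β → ℝ) (ρ : ℝ) (U : β → ℝ) (x x' : α) : ℝ :=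
  ∑ y, W x y * W x' y ^ ρ * U y ^ (-ρ)

theorem overlap_pos (hW : ∀ x y, 0 ≤ W x y) (hU : ∀ y, 0 ≤ U y) (ρ : ℝ) {x x' : α} {y : β}
    (hx : 0 < W x y) (hx' : 0 < W x' y) (hy : 0 < U y) : 0 < overlap W ρ U x x' :=
  Finset.sum_pos'
    (fun z _ => mul_nonneg (mul_nonneg (hW x z) (rpow_nonneg (hW x' z) ρ)) (rpow_nonneg (hU z) _))
    ⟨y, Finset.mem_univ y, mul_pos (mul_pos hx (rpow_pos_of_pos hx' ρ)) (rpow_pos_of_pos hy _)⟩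

theorem overlap_const_mul {c : ℝ} (hc : 0 ≤ c) (hU : ∀ y, 0 ≤ U y) (ρ : ℝ) (x x' : α) :
    overlap W ρ (fun y => c * U y) x x' = c ^ (-ρ) * overlap W ρ U x x' := by
  simp only [overlap, Finset.mul_sum]
  refine Finset.sum_congr rfl fun y _ => ?_
  rw [mul_rpow hc (hU y)]
  ring

end Overlap

section OverlapExponent

variable {W : 𝒳 → 𝒴 → ℝ} {p : 𝒳 → ℝ} {U : 𝒴 → ℝ} {Q : 𝒳 → 𝒳 → ℝ}

/-- The exponent at rate `R` with multiplier `ρ` and reference function `U`. The bound on `Θ` is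
its value at `U = U*`, and the `σ = 1` objective in `Θ` is its value at rate `R - H(Q_X)` and
`U = G`. -/
noncomputable def overlapExponent (W : 𝒳 → 𝒴 → ℝ) (Q : 𝒳 → 𝒳 → ℝ) (ρ R : ℝ) (U : 𝒴 → ℝ) : ℝ :=
  ρ * R - ∑ x, ∑ x', Q x x' * log (overlap W ρ U x x')

theorem overlapExponent_exp_mul {ρ : ℝ} (hU : ∀ y, 0 ≤ U y)
    (hoverlap : ∀ x x', overlap W ρ U x x' ≠ 0) (hQ : ∑ x, ∑ x', Q x x' = 1) (R h : ℝ) :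
    overlapExponent W Q ρ R (fun y => exp h * U y) = overlapExponent W Q ρ (R + h) U := by
  have hlog (x x' : 𝒳) : log (overlap W ρ (fun y => exp h * U y) x x') =
      -ρ * h + log (overlap W ρ U x x') := by
    rw [overlap_const_mul (exp_pos h).le hU,
      log_mul (rpow_pos_of_pos (exp_pos h) _).ne' (hoverlap x x'), log_rpow (exp_pos h), log_exp]
  simp only [overlapExponent, hlog, mul_add, Finset.sum_add_distrib, ← Finset.sum_mul, hQ]
  ring

theorem overlapExponent_Gfun_one_escort (hW : ∀ x y, 0 ≤ W x y)
    (hshared : ∀ x x', ∃ y, 0 < W x y ∧ 0 < W x' y) (hp : ∀ x, 0 < p x)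
    (hQ : ∑ x, ∑ x', Q x x' = 1) {s : ℝ} (hs : s ≠ 1) (ρ R : ℝ) :
    overlapExponent W Q ρ R (fun y => Gfun W p y 1 (1 - s)⁻¹ (escort p s)) =
      overlapExponent W Q ρ (R + renyiEnt p s) (outputDist W p) := by
  have hU := outputDist_nonneg hW fun x => (hp x).le
  have hoverlap (x x' : 𝒳) : overlap W ρ (outputDist W p) x x' ≠ 0 := by
    obtain ⟨y, hx, hx'⟩ := hshared x x'
    exact (overlap_pos hW hU ρ hx hx' (outputDist_pos hW hp hx)).ne'
  simp only [Gfun_one_escort W hp hs]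
  exact overlapExponent_exp_mul hU hoverlap hQ R (renyiEnt p s)

theorem continuous_overlapExponent_rate (W : 𝒳 → 𝒴 → ℝ) (Q : 𝒳 → 𝒳 → ℝ) (ρ : ℝ) (U : 𝒴 → ℝ) :
    Continuous fun R => overlapExponent W Q ρ R U := by
  unfold overlapExponent
  fun_prop

end OverlapExponent

theorem Theta_upper_bound_general {W : 𝒳 → 𝒴 → ℝ} (hW : ∀ x y, 0 ≤ W x y)
    (hshared : ∀ x x', ∃ y, 0 < W x y ∧ 0 < W x' y) {QX : 𝒳 → ℝ} (hQX : IsPosPMF QX) (R : ℝ)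
    {QXX' : 𝒳 → 𝒳 → ℝ} (hQ : ∑ x, ∑ x', QXX' x x' = 1) :
    Theta W QX QXX' R ≤
      ⨆ ρ : {ρ : ℝ // 0 ≤ ρ}, (overlapExponent W QXX' ρ R (outputDist W QX) : EReal) := by
  have := hQX.nonempty
  refine iSup_mono fun ρ => ?_
  have hrate : Tendsto (fun s => R - ent QX + renyiEnt QX s) (𝓝[<] 1) (𝓝 R) := by
    simpa using ((tendsto_renyiEnt_one hQX).mono_left (nhdsLT_le_nhdsNE 1)).const_add (R - ent QX)
  have hcont := continuous_coe_real_ereal.comp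
    (continuous_overlapExponent_rate W QXX' ρ (outputDist W QX))
  refine ge_of_tendsto ((hcont.tendsto R).comp hrate) ?_
  filter_upwards [self_mem_nhdsWithin] with s (hs : s < 1)
  have hobj := overlapExponent_Gfun_one_escort hW hshared hQX.1 hQ hs.ne ρ (R - ent QX)
  refine iInf_le_of_le ⟨1, one_pos⟩ <| iInf_le_of_le ⟨(1 - s)⁻¹, inv_nonneg.mpr (by linarith)⟩ <|
    iInf_le_of_le ⟨escort QX s, isPosPMF_escort hQX.1 s⟩ (EReal.coe_le_coe ?_)
  simpa only [overlapExponent, overlap, mul_one] using hobj.le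

/-- **Appendix D, eqs. (D.18)–(D.24):** an upper bound on `Θ(Q_{XX'},R)` in terms of the
output distribution `U*(y) = ∑_x W(y|x) Q_X(x)`. -/
theorem Theta_upper_bound {𝒳 𝒴 : Type*} [Fintype 𝒳] [Fintype 𝒴]
    [Nonempty 𝒳] [Nonempty 𝒴]
    (W : 𝒳 → 𝒴 → ℝ) (hW : IsChannel W)
    (QX : 𝒳 → ℝ) (hQX : IsPosPMF QX) (R : ℝ) (hR : 0 ≤ R)
    (QXX' : 𝒳 → 𝒳 → ℝ) (hQ : IsJointPMF QXX') :
    Theta W QX QXX' R ≤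
      ⨆ ρ : {ρ : ℝ // 0 ≤ ρ},
        ((ρ.1 * R - ∑ x, ∑ x', QXX' x x' *
          Real.log (∑ y, W x y * W x' y ^ ρ.1 *
            (∑ x'', W x'' y * QX x'') ^ (-ρ.1)) : ℝ) : EReal) := by
  have ⟨y⟩ := ‹Nonempty 𝒴›
  exact Theta_upper_bound_general (fun x y => ((hW x).1 y).le)
    (fun x x' => ⟨y, (hW x).1 y, (hW x').1 y⟩) hQX R hQ.2

end EE
end
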